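/- arXiv:2101.03266 — 8 statements merged into one kernel-verified Lean document; each statement's English description precedes it below -/
import Mathlib

section
/- Let ω > 0 and h > 0 with ω·h < 2π, and let c₀ = −1/ω² + (h/(2ω))·cot(ω·h/2) and c₋₁ = −c₀. Then the relative-error function of Integrator A, E(s) = 1 − (e^{−s·h} + (h/2)·s + (h/2)·s·e^{−s·h} + c₀·s² + c₋₁·s²·e^{−s·h}) defined for complex s, satisfies E(i·ω) = 0 and E(−i·ω) = 0. -/
/-!
Up to the factor `2 * exp (-(s * h / 2))`, the error function at `s` is
`(1 - c₀ * s ^ 2) * sinh θ - θ * cosh θ` with `θ = s * h / 2`. This is odd in `s`, so the zeros come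
in pairs `±s`, and at `s = I * ω` its vanishing is the equation
`(1 + c₀ * ω ^ 2) * sin (ω * h / 2) = ω * h / 2 * cos (ω * h / 2)`, which is linear in `c₀`
and whose solution is the coefficient of Integrator A.
-/

open Complex

/-- The relative-error function of the two-point integrator with step size `h` and coefficients
`a₋₁ = 1`, `b₀ = b₋₁ = h / 2`, `c₀ = c` and `c₋₁ = -c`. The coefficient `c` is left free, and `h`
and `c` may be complex. -/
noncomputable def integratorError (h c s : ℂ) : ℂ :=
  1 - (exp (-s * h) + h / 2 * s + h / 2 * s * exp (-s * h)
    + c * s ^ 2 + -c * s ^ 2 * exp (-s * h))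

/-- The coefficient `c₀` that Integrator A attaches to the angular frequency `ω` and the step size
`h`, both allowed to be complex. It is meaningful only where `sin (ω * h / 2) ≠ 0`. -/
noncomputable def integratorACoeff (ω h : ℂ) : ℂ :=
  -1 / ω ^ 2 + h / (2 * ω) * cot (ω * h / 2)

theorem integratorError_eq_exp_mul (h c s : ℂ) :
    integratorError h c s = 2 * exp (-(s * h / 2)) *
      ((1 - c * s ^ 2) * sinh (s * h / 2) - s * h / 2 * cosh (s * h / 2)) := by
  have exp_sq : exp (-s * h) = exp (-(s * h / 2)) ^ 2 := by
    rw [← exp_nat_mul]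
    ring_nf
  have exp_inv : exp (-(s * h / 2)) * exp (s * h / 2) = 1 := by
    rw [← exp_add, neg_add_cancel, exp_zero]
  rw [integratorError, exp_sq, sinh, cosh]
  linear_combination (s * h / 2 - (1 - c * s ^ 2)) * exp_inv

theorem integratorError_eq_zero_iff {h c s : ℂ} :
    integratorError h c s = 0 ↔
      (1 - c * s ^ 2) * sinh (s * h / 2) = s * h / 2 * cosh (s * h / 2) := by
  simp [integratorError_eq_exp_mul, exp_ne_zero, sub_eq_zero]

theorem integratorError_neg_eq_zero_iff {h c s : ℂ} :
    integratorError h c (-s) = 0 ↔ integratorError h c s = 0 := by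
  simp [integratorError_eq_zero_iff, neg_div]

theorem integratorError_I_mul_eq_zero_iff {h c ω : ℂ} :
    integratorError h c (I * ω) = 0 ↔
      (1 + c * ω ^ 2) * sin (ω * h / 2) = ω * h / 2 * cos (ω * h / 2) := by
  have angle : I * ω * h / 2 = ω * h / 2 * I := by ring
  rw [integratorError_eq_zero_iff, angle, sinh_mul_I, cosh_mul_I, mul_right_comm (ω * h / 2),
    ← mul_assoc, mul_left_inj' I_ne_zero, mul_pow, I_sq, neg_one_mul, mul_neg, sub_neg_eq_add]

theorem one_add_integratorACoeff_mul_sq_mul_sin {ω h : ℂ} (hsin : sin (ω * h / 2) ≠ 0) :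
    (1 + integratorACoeff ω h * ω ^ 2) * sin (ω * h / 2) = ω * h / 2 * cos (ω * h / 2) := by
  have hω : ω ≠ 0 := by
    rintro rfl
    simp at hsin
  rw [integratorACoeff, cot]
  field_simp
  ring

theorem integratorA_zero_at_pm_i_omega_general {ω h : ℂ} (hsin : sin (ω * h / 2) ≠ 0) :
    integratorError h (integratorACoeff ω h) (I * ω) = 0 ∧
      integratorError h (integratorACoeff ω h) (-(I * ω)) = 0 := by
  rw [integratorError_neg_eq_zero_iff, and_self, integratorError_I_mul_eq_zero_iff]
  exact one_add_integratorACoeff_mul_sq_mul_sin hsin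

theorem integratorA_zero_at_pm_i_omega
    (ω h : ℝ) (hω : 0 < ω) (hh : 0 < h) (hωh : ω * h < 2 * Real.pi)
    (c₀ cm1 : ℝ)
    (hc₀ : c₀ = -1 / ω ^ 2 + (h / (2 * ω)) * Real.cot (ω * h / 2))
    (hcm1 : cm1 = -c₀)
    (E : ℂ → ℂ)
    (hE : E = fun s => 1 - (Complex.exp (-s * h) + (h / 2) * s
      + (h / 2) * s * Complex.exp (-s * h)
      + c₀ * s ^ 2 + cm1 * s ^ 2 * Complex.exp (-s * h))) :
    E (Complex.I * ω) = 0 ∧ E (-(Complex.I * ω)) = 0 := by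
  have hsin : Real.sin (ω * h / 2) ≠ 0 :=
    (Real.sin_pos_of_pos_of_lt_pi (by positivity) (by linarith)).ne'
  have hcoeff : (c₀ : ℂ) = integratorACoeff ω h := by
    simp [hc₀, integratorACoeff]
  have hEerror : E = integratorError h (integratorACoeff ω h) := by
    ext s
    simp only [hE, hcm1, ofReal_neg, hcoeff, integratorError]
  rw [hEerror]
  exact integratorA_zero_at_pm_i_omega_general (mod_cast hsin)
end

section
/- Let ω > 0 and h > 0 with ω·h < 2π, and let c₀ = −1/ω² + (h/(2ω))·cot(ω·h/2) and c₋₁ = −c₀. Then the relative-error function of Integrator A, E(s) = 1 − (e^{−s·h} + (h/2)·s + (h/2)·s·e^{−s·h} + c₀·s² + c₋₁·s²·e^{−s·h}) defined for complex s, has a zero of multiplicity at least three at s = 0; that is, E(0) = 0, E′(0) = 0 and E″(0) = 0. -/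
/-!
The relative error of a one-step integrator has the form `p(s) - q(s) e^{-sh}` with polynomials `p`
and `q`, and differentiation preserves this form: it sends `(p, q)` to `(p', q' - h q)`. Its
derivatives at `0` are therefore read off from the values `p(0)` and `q(0)`. For Integrator A
the weights of `ẍ` first enter at order `2`, through the sum `c₀ + c₋₁ = 0`; what remains is the
trapezoidal rule, which is exact to second order.
-/

open Polynomial

/-- The quasi-polynomial `p(s) - q(s) e^{-sh}` with a single delay `h`, the class of functions
containing the relative errors of one-step integrators and closed under differentiation. -/
noncomputable def delayQuasiPolynomial (h : ℂ) (p q : ℂ[X]) (s : ℂ) : ℂ :=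
  p.eval s - q.eval s * Complex.exp (-s * h)

/-- The relative-error function of the integrator
`x_t = a x_{t-h} + b₀ ẋ_t + b₁ ẋ_{t-h} + c₀ ẍ_t + c₁ ẍ_{t-h}`: the residual left by `x_t = e^{st}`,
divided by `e^{st}`. The index `1` stands for the paper's index `-1`. -/
noncomputable def relativeError (h a b₀ b₁ c₀ c₁ s : ℂ) : ℂ :=
  1 - (a * Complex.exp (-s * h) + b₀ * s + b₁ * s * Complex.exp (-s * h)
    + c₀ * s ^ 2 + c₁ * s ^ 2 * Complex.exp (-s * h))

section DelayQuasiPolynomial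

variable (h : ℂ) (p q : ℂ[X])

lemma delayQuasiPolynomial_zero :
    delayQuasiPolynomial h p q 0 = p.eval 0 - q.eval 0 := by
  simp [delayQuasiPolynomial]

lemma hasDerivAt_delayQuasiPolynomial (s : ℂ) :
    HasDerivAt (delayQuasiPolynomial h p q)
      (delayQuasiPolynomial h (derivative p) (derivative q - C h * q) s) s := by
  have hexp : HasDerivAt (fun z : ℂ => Complex.exp (-z * h)) (Complex.exp (-s * h) * (-1 * h)) s :=
    ((hasDerivAt_neg s).mul_const h).cexp
  refine ((p.hasDerivAt s).sub ((q.hasDerivAt s).mul hexp)).congr_deriv ?_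
  simp only [delayQuasiPolynomial, eval_sub, eval_mul, eval_C]
  ring

lemma deriv_delayQuasiPolynomial :
    deriv (delayQuasiPolynomial h p q) =
      delayQuasiPolynomial h (derivative p) (derivative q - C h * q) :=
  funext fun s => (hasDerivAt_delayQuasiPolynomial h p q s).deriv

end DelayQuasiPolynomial

section RelativeError

variable (h a b₀ b₁ c₀ c₁ : ℂ)

lemma relativeError_eq_delayQuasiPolynomial :
    relativeError h a b₀ b₁ c₀ c₁ =
      delayQuasiPolynomial h (1 - C b₀ * X - C c₀ * X ^ 2) (C a + C b₁ * X + C c₁ * X ^ 2) := by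
  funext s
  simp only [relativeError, delayQuasiPolynomial, eval_sub, eval_add, eval_mul, eval_pow, eval_one,
    eval_C, eval_X]
  ring

lemma relativeError_zero : relativeError h a b₀ b₁ c₀ c₁ 0 = 1 - a := by
  simp [relativeError]

lemma deriv_relativeError_zero :
    deriv (relativeError h a b₀ b₁ c₀ c₁) 0 = a * h - (b₀ + b₁) := by
  rw [relativeError_eq_delayQuasiPolynomial, deriv_delayQuasiPolynomial, delayQuasiPolynomial_zero]
  simp only [derivative_sub, derivative_add, derivative_mul, derivative_one, derivative_C,
    derivative_X, derivative_X_sq, eval_sub, eval_add, eval_mul, eval_pow, eval_zero, eval_one,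
    eval_C, eval_X]
  ring

lemma deriv_deriv_relativeError_zero :
    deriv (deriv (relativeError h a b₀ b₁ c₀ c₁)) 0 =
      2 * b₁ * h - a * h ^ 2 - 2 * (c₀ + c₁) := by
  rw [relativeError_eq_delayQuasiPolynomial, deriv_delayQuasiPolynomial,
    deriv_delayQuasiPolynomial, delayQuasiPolynomial_zero]
  simp only [derivative_sub, derivative_add, derivative_mul, derivative_zero, derivative_one,
    derivative_C, derivative_X, derivative_X_sq, eval_sub, eval_add, eval_mul, eval_pow, eval_zero,
    eval_one, eval_C, eval_X]
  ring

end RelativeError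

theorem integratorA_triple_zero_at_zero_general (h c : ℂ) :
    relativeError h 1 (h / 2) (h / 2) c (-c) 0 = 0 ∧
      deriv (relativeError h 1 (h / 2) (h / 2) c (-c)) 0 = 0 ∧
      deriv (deriv (relativeError h 1 (h / 2) (h / 2) c (-c))) 0 = 0 := by
  rw [relativeError_zero, deriv_relativeError_zero, deriv_deriv_relativeError_zero]
  refine ⟨?_, ?_, ?_⟩ <;> ring

theorem integratorA_triple_zero_at_zero
    (ω h : ℝ) (hω : 0 < ω) (hh : 0 < h) (hωh : ω * h < 2 * Real.pi)
    (c₀ cm1 : ℝ)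
    (hc₀ : c₀ = -1 / ω ^ 2 + (h / (2 * ω)) * Real.cot (ω * h / 2))
    (hcm1 : cm1 = -c₀)
    (E : ℂ → ℂ)
    (hE : E = fun s => 1 - (Complex.exp (-s * h) + (h / 2) * s
      + (h / 2) * s * Complex.exp (-s * h)
      + c₀ * s ^ 2 + cm1 * s ^ 2 * Complex.exp (-s * h))) :
    E 0 = 0 ∧ deriv E 0 = 0 ∧ deriv (deriv E) 0 = 0 := by
  have hE_eq : E = relativeError h 1 (h / 2) (h / 2) c₀ (-c₀) := by
    simp only [hE, hcm1, relativeError, Complex.ofReal_neg, one_mul, funext_iff, implies_true]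
  exact hE_eq ▸ integratorA_triple_zero_at_zero_general h c₀
end

section
/- Let ω > 0 and h > 0 with ω·h < 2π, let c₀ = −1/ω² + (h/(2ω))·cot(ω·h/2) and c₋₁ = −c₀, and let x(t) = sin(ω·t + φ) for an arbitrary real phase φ. Then for every real t, x(t) = x(t − h) + (h/2)·x′(t) + (h/2)·x′(t − h) + c₀·x″(t) + c₋₁·x″(t − h); that is, Integrator A reproduces a pure sinusoid at angular frequency ω exactly. -/
/-!
Over one step from `t - h` to `t`, the increments of `x` and `x''` and the sum of the end values of
`x'` are all multiples of the cosine of the phase at the midpoint `t - h / 2`. The integrator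
therefore reproduces `x` as soon as a single scalar relation between the multipliers holds, and `c₀`
is the solution of that relation.
-/

theorem hasDerivAt_const_mul_add {𝕜 : Type*} [NontriviallyNormedField 𝕜] (a b t : 𝕜) :
    HasDerivAt (fun s => a * s + b) a t := by
  simpa using ((hasDerivAt_id t).const_mul a).add_const b

theorem deriv_sin_const_mul_add (ω φ : ℝ) :
    deriv (fun t => Real.sin (ω * t + φ)) = fun t => Real.cos (ω * t + φ) * ω :=
  funext fun t => (hasDerivAt_const_mul_add ω φ t).sin.deriv

theorem deriv_deriv_sin_const_mul_add (ω φ : ℝ) :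
    deriv (deriv fun t => Real.sin (ω * t + φ)) = fun t => -ω ^ 2 * Real.sin (ω * t + φ) := by
  funext t
  rw [deriv_sin_const_mul_add, ((hasDerivAt_const_mul_add ω φ t).cos.mul_const ω).deriv]
  ring

theorem sin_sub_sin_step (ω h φ t : ℝ) :
    Real.sin (ω * t + φ) - Real.sin (ω * (t - h) + φ) =
      2 * Real.sin (ω * h / 2) * Real.cos (ω * (t - h / 2) + φ) := by
  rw [Real.sin_sub_sin]
  ring_nf

theorem cos_add_cos_step (ω h φ t : ℝ) :
    Real.cos (ω * t + φ) + Real.cos (ω * (t - h) + φ) =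
      2 * Real.cos (ω * h / 2) * Real.cos (ω * (t - h / 2) + φ) := by
  rw [Real.cos_add_cos]
  ring_nf

theorem integratorA_coeff_mul_sq_mul_sin {ω h : ℝ} (hsin : Real.sin (ω * h / 2) ≠ 0) :
    (-1 / ω ^ 2 + (h / (2 * ω)) * Real.cot (ω * h / 2)) * ω ^ 2 * Real.sin (ω * h / 2) =
      ω * h / 2 * Real.cos (ω * h / 2) - Real.sin (ω * h / 2) := by
  have hω : ω ≠ 0 := by
    rintro rfl
    simp at hsin
  rw [Real.cot_eq_cos_div_sin]
  field_simp
  ring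

theorem integratorA_exact_on_sinusoid_general
    (ω h φ : ℝ) (hsin : Real.sin (ω * h / 2) ≠ 0)
    (c₀ cm1 : ℝ)
    (hc₀ : c₀ = -1 / ω ^ 2 + (h / (2 * ω)) * Real.cot (ω * h / 2))
    (hcm1 : cm1 = -c₀)
    (x : ℝ → ℝ) (hx : x = fun t => Real.sin (ω * t + φ)) :
    ∀ t : ℝ, x t = x (t - h) + (h / 2) * deriv x t + (h / 2) * deriv x (t - h)
      + c₀ * deriv (deriv x) t + cm1 * deriv (deriv x) (t - h) := by
  intro t
  have hcoeff : c₀ * ω ^ 2 * Real.sin (ω * h / 2) =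
      ω * h / 2 * Real.cos (ω * h / 2) - Real.sin (ω * h / 2) :=
    hc₀ ▸ integratorA_coeff_mul_sq_mul_sin hsin
  rw [hcm1, hx, deriv_deriv_sin_const_mul_add, deriv_sin_const_mul_add]
  linear_combination
    (1 + c₀ * ω ^ 2) * sin_sub_sin_step ω h φ t
      - (h / 2 * ω) * cos_add_cos_step ω h φ t
      + 2 * Real.cos (ω * (t - h / 2) + φ) * hcoeff

theorem integratorA_exact_on_sinusoid
    (ω h φ : ℝ) (hω : 0 < ω) (hh : 0 < h) (hωh : ω * h < 2 * Real.pi)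
    (c₀ cm1 : ℝ)
    (hc₀ : c₀ = -1 / ω ^ 2 + (h / (2 * ω)) * Real.cot (ω * h / 2))
    (hcm1 : cm1 = -c₀)
    (x : ℝ → ℝ) (hx : x = fun t => Real.sin (ω * t + φ)) :
    ∀ t : ℝ, x t = x (t - h) + (h / 2) * deriv x t + (h / 2) * deriv x (t - h)
      + c₀ * deriv (deriv x) t + cm1 * deriv (deriv x) (t - h) :=
  have hsin : 0 < Real.sin (ω * h / 2) := Real.sin_pos_of_pos_of_lt_pi (by positivity) (by linarith)
  integratorA_exact_on_sinusoid_general ω h φ hsin.ne' c₀ cm1 hc₀ hcm1 x hx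
end

section
/- Let ω > 0 and h > 0, let b₀ = sin(ω·h)/ω and c₀ = (cos(ω·h) − 1)/ω², and let x(t) = sin(ω·t + φ) for an arbitrary real phase φ. Then for every real t, x(t) = x(t − h) + b₀·x′(t) + c₀·x″(t); that is, Integrator B reproduces a pure sinusoid at angular frequency ω exactly. -/
/-!
A solution of `x'' = -ω² x` rotates uniformly in the phase plane with coordinates `(x, x' / ω)`.
Rotating the state at time `t` back to time `a` and reading off the position yields an expression
which does not depend on `t`, so it equals its value `x a` at `t = a`. Since `x'' = -ω² x`, the
formula obtained for `a = t - h` is Integrator B.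
-/

open Real

section HarmonicOscillator

variable {E : Type*} [NormedAddCommGroup E] [NormedSpace ℝ E] {ω : ℝ} {x v : ℝ → E}

lemma hasDerivAt_cos_smul_sub_sin_smul_of_harmonic (hω : ω ≠ 0) {a t : ℝ}
    (hx : HasDerivAt x (v t) t) (hv : HasDerivAt v (-ω ^ 2 • x t) t) :
    HasDerivAt (fun s ↦ cos (ω * (s - a)) • x s - (sin (ω * (s - a)) / ω) • v s) 0 t := by
  have phase : HasDerivAt (fun s ↦ ω * (s - a)) ω t := by
    simpa using ((hasDerivAt_id t).sub_const a).const_mul ω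
  refine ((phase.cos.fun_smul hx).fun_sub ((phase.sin.div_const ω).fun_smul hv)).congr_deriv ?_
  match_scalars <;> field_simp <;> ring

lemma eq_cos_smul_sub_sin_smul_of_harmonic (hω : ω ≠ 0) (hx : ∀ t, HasDerivAt x (v t) t)
    (hv : ∀ t, HasDerivAt v (-ω ^ 2 • x t) t) (a t : ℝ) :
    x a = cos (ω * (t - a)) • x t - (sin (ω * (t - a)) / ω) • v t := by
  have rotation_deriv (s : ℝ) :=
    hasDerivAt_cos_smul_sub_sin_smul_of_harmonic hω (a := a) (hx s) (hv s)
  simpa using is_const_of_deriv_eq_zero (fun s ↦ (rotation_deriv s).differentiableAt)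
    (fun s ↦ (rotation_deriv s).deriv) a t

theorem integratorB_exact_on_sinusoid_general (hω : ω ≠ 0) (hx : ContDiff ℝ 2 x)
    (harmonic : ∀ t, deriv (deriv x) t = -ω ^ 2 • x t) (h t : ℝ) :
    x t = x (t - h) + (sin (ω * h) / ω) • deriv x t
      + ((cos (ω * h) - 1) / ω ^ 2) • deriv (deriv x) t := by
  have hasDeriv (s : ℝ) : HasDerivAt x (deriv x s) s :=
    (hx.differentiable two_ne_zero s).hasDerivAt
  have hasDeriv_deriv (s : ℝ) : HasDerivAt (deriv x) (-ω ^ 2 • x s) s :=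
    harmonic s ▸ (hx.differentiable_deriv_two s).hasDerivAt
  rw [eq_cos_smul_sub_sin_smul_of_harmonic hω hasDeriv hasDeriv_deriv (t - h) t, sub_sub_cancel,
    harmonic]
  match_scalars <;> field_simp <;> ring

end HarmonicOscillator

lemma deriv_deriv_sin_mul_add (ω φ t : ℝ) :
    deriv (deriv fun s ↦ sin (ω * s + φ)) t = -ω ^ 2 * sin (ω * t + φ) := by
  have phase (s : ℝ) : HasDerivAt (fun s ↦ ω * s + φ) ω s := by
    simpa using ((hasDerivAt_id s).const_mul ω).add_const φ
  have deriv_sin : deriv (fun s ↦ sin (ω * s + φ)) = fun s ↦ cos (ω * s + φ) * ω :=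
    funext fun s ↦ (phase s).sin.deriv
  rw [deriv_sin, ((phase t).cos.mul_const ω).deriv]
  ring

theorem integratorB_exact_on_sinusoid
    (ω h φ : ℝ) (hω : 0 < ω) (hh : 0 < h)
    (b₀ c₀ : ℝ)
    (hb₀ : b₀ = Real.sin (ω * h) / ω)
    (hc₀ : c₀ = (Real.cos (ω * h) - 1) / ω ^ 2)
    (x : ℝ → ℝ) (hx : x = fun t => Real.sin (ω * t + φ)) :
    ∀ t : ℝ, x t = x (t - h) + b₀ * deriv x t + c₀ * deriv (deriv x) t := by
  subst hb₀ hc₀ hx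
  exact integratorB_exact_on_sinusoid_general hω.ne' (by fun_prop) (deriv_deriv_sin_mul_add ω φ) h
end

section
/- Let h > 0 and let p be a real polynomial of degree at most 4. Then for every real t, p(t) = p(t − h) + (h/2)·p′(t) + (h/2)·p′(t − h) − (h²/12)·p″(t) + (h²/12)·p″(t − h), where p′ and p″ are the first and second derivatives of p; that is, Integrator C is exact on polynomials of degree at most 4. -/
/-!
The defect of Integrator C over a step from `s` to `s + h` is linear in the polynomial and invariant
under translation, so it is determined by its values on the monomials `X ^ n` at `s = 0`. For
`3 ≤ n` twelve times that value is `(12 - 6 * n + n * (n - 1)) * h ^ n = (n - 3) * (n - 4) * h ^ n`,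
and for `n ≤ 2` it vanishes because one of the terms at the left endpoint also contributes.
-/

section Defect

open Polynomial

theorem derivative_taylor {R : Type*} [CommSemiring R] (s : R) (p : R[X]) :
    derivative (taylor s p) = taylor s (derivative p) := by
  simp [taylor_apply, derivative_comp]

variable {R : Type*} [CommRing R]

/-- Twelve times the defect of Integrator C on a polynomial, over the step from `s` to `s + h`.
The factor twelve clears the denominators, so that the notion makes sense over any commutative
ring. -/
noncomputable def obreshkovDefect (s h : R) : R[X] →ₗ[R] R :=
  (12 : R) • (leval (s + h) - leval s)
    - (6 * h) • (leval (s + h) + leval s) ∘ₗ derivative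
    + h ^ 2 • (leval (s + h) - leval s) ∘ₗ derivative ∘ₗ derivative

theorem obreshkovDefect_apply (s h : R) (p : R[X]) :
    obreshkovDefect s h p = 12 * (p.eval (s + h) - p.eval s)
      - 6 * h * (p.derivative.eval (s + h) + p.derivative.eval s)
      + h ^ 2 * (p.derivative.derivative.eval (s + h) - p.derivative.derivative.eval s) :=
  rfl

theorem obreshkovDefect_zero_taylor (s h : R) (p : R[X]) :
    obreshkovDefect 0 h (taylor s p) = obreshkovDefect s h p := by
  simp only [obreshkovDefect_apply, derivative_taylor, taylor_eval, zero_add, add_comm h s]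

/-- Truncated subtraction makes `(n - 3).choose 2` vanish for every `n ≤ 4`. -/
theorem obreshkovDefect_zero_X_pow (h : R) (n : ℕ) :
    obreshkovDefect 0 h (X ^ n) = 2 * ((n - 3).choose 2 : R) * h ^ n := by
  have eval_derivative (x : R) : (derivative (X ^ n)).eval x = n * x ^ (n - 1) := by
    simp [derivative_X_pow]
  have eval_derivative_derivative (x : R) :
      (derivative (derivative (X ^ n))).eval x = n * ((n - 1 : ℕ) * x ^ (n - 2)) := by
    simp [derivative_X_pow, Nat.sub_sub]
  simp only [obreshkovDefect_apply, eval_derivative, eval_derivative_derivative, eval_pow, eval_X,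
    zero_add]
  obtain _ | _ | _ | m := n
  · simp
  · suffices 12 * h - 6 * h * (1 + 1) = 0 by simpa
    ring
  · suffices 12 * h ^ 2 - 6 * h * (2 * h) = 0 by simpa [one_add_one_eq_two]
    ring
  · have two_mul_choose : 2 * (m.choose 2 : R) = m * (m - 1) := by
      rw [← Nat.cast_descFactorial_two, Nat.descFactorial_eq_factorial_mul_choose]
      simp
    suffices 12 * h ^ (m + 3) - 6 * h * ((m + 3) * h ^ (m + 2))
        + h ^ 2 * ((m + 3) * ((m + 2) * h ^ (m + 1))) = m * (m - 1) * h ^ (m + 3) by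
      simpa [two_mul_choose, add_assoc, one_add_one_eq_two, two_add_one_eq_three]
    ring

theorem obreshkovDefect_eq_taylor_sum (s h : R) (p : R[X]) :
    obreshkovDefect s h p =
      (taylor s p).sum fun n a ↦ a * (2 * ((n - 3).choose 2 : R) * h ^ n) := by
  rw [← obreshkovDefect_zero_taylor]
  conv_lhs => rw [(taylor s p).as_sum_support_C_mul_X_pow]
  simp only [map_sum, ← smul_eq_C_mul, map_smul, obreshkovDefect_zero_X_pow, smul_eq_mul,
    Polynomial.sum_def]

theorem obreshkovDefect_eq_zero_of_degree_le_four (s h : R) {p : R[X]} (hp : p.degree ≤ 4) :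
    obreshkovDefect s h p = 0 := by
  rw [obreshkovDefect_eq_taylor_sum, Polynomial.sum_def]
  refine Finset.sum_eq_zero fun n hn ↦ ?_
  have hn_le : n ≤ 4 := by
    exact_mod_cast (le_degree_of_mem_supp n hn).trans ((degree_taylor p s).trans_le hp)
  rw [Nat.choose_eq_zero_of_lt (by lia : n - 3 < 2)]
  simp

theorem integratorC_exact_on_deg_le_four_general {K : Type*} [Field K] (h12 : (12 : K) ≠ 0)
    (h t : K) {p : K[X]} (hp : p.degree ≤ 4) :
    p.eval t = p.eval (t - h)
      + (h / 2) * p.derivative.eval t + (h / 2) * p.derivative.eval (t - h)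
      - (h ^ 2 / 12) * p.derivative.derivative.eval t
      + (h ^ 2 / 12) * p.derivative.derivative.eval (t - h) := by
  have defect_eq_zero := obreshkovDefect_eq_zero_of_degree_le_four (t - h) h hp
  rw [obreshkovDefect_apply, sub_add_cancel] at defect_eq_zero
  have h2 : (2 : K) ≠ 0 := fun h0 ↦ h12 (by linear_combination 6 * h0)
  field_simp
  linear_combination 2 * defect_eq_zero

end Defect

open Polynomial in
theorem integratorC_exact_on_deg_le_four
    (h : ℝ) (hh : 0 < h) (p : Polynomial ℝ) (hp : p.degree ≤ 4) :
    ∀ t : ℝ, p.eval t = p.eval (t - h)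
      + (h / 2) * (p.derivative.eval t) + (h / 2) * (p.derivative.eval (t - h))
      - (h ^ 2 / 12) * ((p.derivative.derivative).eval t)
      + (h ^ 2 / 12) * ((p.derivative.derivative).eval (t - h)) :=
  fun t ↦ integratorC_exact_on_deg_le_four_general (by norm_num) h t hp
end

section
/- For every real x with 0 < x < π, one has (3/x²)·(1 − x·cot(x)) > 1. -/
/-!
After multiplying by `x ^ 2 * sin x > 0`, the claim is that
`g x = 3 * (sin x - x * cos x) - x ^ 2 * sin x` is positive on `(0, π)`. Put
`f x = sin x - x * cos x`. Then `g' x = x * f x` and `f' x = x * sin x`, while `f 0 = g 0 = 0`, so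
positivity of `sin` on `(0, π)` passes first to `f` and then to `g`.
-/

open Real Set

theorem hasDerivAt_sin_sub_mul_cos (x : ℝ) :
    HasDerivAt (fun y ↦ sin y - y * cos y) (x * sin x) x := by
  refine ((hasDerivAt_sin x).sub ((hasDerivAt_id x).mul (hasDerivAt_cos x))).congr_deriv ?_
  simp

theorem strictMonoOn_sin_sub_mul_cos :
    StrictMonoOn (fun x ↦ sin x - x * cos x) (Icc 0 π) := by
  refine strictMonoOn_of_hasDerivWithinAt_pos (convex_Icc 0 π) (by fun_prop)
    (fun x _ ↦ (hasDerivAt_sin_sub_mul_cos x).hasDerivWithinAt) fun x hx ↦ ?_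
  rw [interior_Icc] at hx
  exact mul_pos hx.1 (sin_pos_of_mem_Ioo hx)

theorem mul_cos_lt_sin {x : ℝ} (hx₀ : 0 < x) (hxπ : x ≤ π) : x * cos x < sin x := by
  simpa using strictMonoOn_sin_sub_mul_cos (left_mem_Icc.2 pi_nonneg) ⟨hx₀.le, hxπ⟩ hx₀

theorem hasDerivAt_three_mul_sin_sub_mul_cos_sub_sq_mul_sin (x : ℝ) :
    HasDerivAt (fun y ↦ 3 * (sin y - y * cos y) - y ^ 2 * sin y) (x * (sin x - x * cos x)) x := by
  refine (((hasDerivAt_sin_sub_mul_cos x).const_mul 3).sub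
    ((hasDerivAt_pow 2 x).mul (hasDerivAt_sin x))).congr_deriv ?_
  push_cast
  ring

theorem strictMonoOn_three_mul_sin_sub_mul_cos_sub_sq_mul_sin :
    StrictMonoOn (fun x ↦ 3 * (sin x - x * cos x) - x ^ 2 * sin x) (Icc 0 π) := by
  refine strictMonoOn_of_hasDerivWithinAt_pos (convex_Icc 0 π) (by fun_prop)
    (fun x _ ↦ (hasDerivAt_three_mul_sin_sub_mul_cos_sub_sq_mul_sin x).hasDerivWithinAt)
    fun x hx ↦ ?_
  rw [interior_Icc] at hx
  exact mul_pos hx.1 (sub_pos.2 (mul_cos_lt_sin hx.1 hx.2.le))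

theorem sq_mul_sin_lt_three_mul_sin_sub_mul_cos {x : ℝ} (hx₀ : 0 < x) (hxπ : x ≤ π) :
    x ^ 2 * sin x < 3 * (sin x - x * cos x) := by
  simpa using strictMonoOn_three_mul_sin_sub_mul_cos_sub_sq_mul_sin
    (left_mem_Icc.2 pi_nonneg) ⟨hx₀.le, hxπ⟩ hx₀

theorem sq_lt_three_mul_one_sub_mul_cot {x : ℝ} (hx₀ : 0 < x) (hxπ : x < π) :
    x ^ 2 < 3 * (1 - x * cot x) := by
  have sin_pos : 0 < sin x := sin_pos_of_pos_of_lt_pi hx₀ hxπ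
  calc
    x ^ 2 < 3 * (sin x - x * cos x) / sin x :=
      (lt_div_iff₀ sin_pos).2 (sq_mul_sin_lt_three_mul_sin_sub_mul_cos hx₀ hxπ.le)
    _ = 3 * (1 - x * cot x) := by
      rw [cot_eq_cos_div_sin]
      field_simp

theorem three_div_sq_one_sub_xcot_gt_one (x : ℝ) (hx0 : 0 < x) (hxpi : x < Real.pi) :
    (3 / x ^ 2) * (1 - x * Real.cot x) > 1 := by
  rw [gt_iff_lt, div_mul_eq_mul_div, one_lt_div (pow_pos hx0 2)]
  exact sq_lt_three_mul_one_sub_mul_cot hx0 hxpi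
end

section
/- Let ω > 0 and h > 0 with ω·h < 2π, and set c₀ = −1/ω² + (h/(2ω))·cot(ω·h/2) and c₋₁ = −c₀. Define for real λ the amplification factor r(λ) = (1 + (h/2)·λ + c₋₁·λ²)/(1 − (h/2)·λ − c₀·λ²). Then 0 < r(λ) < 1 for every real λ < 0, and r(λ) tends to 1 as λ tends to −∞; that is, Integrator A induces no numerical oscillation but damps fast decaying transients only slowly. -/
/-!
Write `c₁ = -c₀`. The denominator `1 - (h / 2) λ + c₁ λ²` of `r` is the numerator evaluated at `-λ`,
so both are positive for all real `λ` as soon as the discriminant `h² / 4 - 4 c₁` is negative, that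
is, `c₁ > h² / 16`; the numerator minus the denominator is `h λ < 0`, and the common leading
coefficient gives the limit `1`. With `x = ω h / 4 ∈ (0, π / 2)` the condition on `c₁` reads
`x² < 1 - 2 x cot (2 x) = 1 - x / tan x + x tan x`, which follows from `x < tan x`.
-/

open Bornology Filter Real Topology

theorem sq_lt_one_sub_mul_cot_two_mul {x : ℝ} (hx₀ : 0 < x) (hx : x < π / 2) :
    x ^ 2 < 1 - 2 * x * cot (2 * x) := by
  have x_lt_tan : x < tan x := lt_tan hx₀ hx
  have tan_pos : 0 < tan x := hx₀.trans x_lt_tan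
  have mul_cot_two_mul : 2 * x * cot (2 * x) = x / tan x - x * tan x := by
    rw [← tan_inv_eq_cot, tan_two_mul, inv_div]
    field_simp
  have div_tan_lt_one : x / tan x < 1 := (div_lt_one tan_pos).2 x_lt_tan
  have sq_lt_mul_tan : x ^ 2 < x * tan x := by
    rw [sq]
    gcongr
  linarith

theorem quadratic_pos_of_discrim_neg {K : Type*} [Field K] [LinearOrder K] [IsStrictOrderedRing K]
    {a b c : K} (ha : 0 < a) (hdiscrim : discrim a b c < 0) (x : K) :
    0 < a * x ^ 2 + b * x + c := by
  have complete_square :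
      4 * a * (a * x ^ 2 + b * x + c) = (2 * a * x + b) ^ 2 - discrim a b c := by
    rw [discrim]
    ring
  refine pos_of_mul_pos_right (a := 4 * a) ?_ (by positivity)
  linarith [sq_nonneg (2 * a * x + b)]

theorem tendsto_quadratic_div_quadratic_cobounded {𝕜 : Type*} [NormedField 𝕜]
    {a a' : 𝕜} (b c b' c' : 𝕜) (ha' : a' ≠ 0) :
    Tendsto (fun x ↦ (a * x ^ 2 + b * x + c) / (a' * x ^ 2 + b' * x + c'))
      (cobounded 𝕜) (𝓝 (a / a')) := by
  let reversed (u : 𝕜) : 𝕜 := (a + b * u + c * u ^ 2) / (a' + b' * u + c' * u ^ 2)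
  have continuousAt_reversed : ContinuousAt reversed 0 :=
    ContinuousAt.div (by fun_prop) (by fun_prop) (by simpa using ha')
  have tendsto_reversed : Tendsto reversed (𝓝 0) (𝓝 (a / a')) := by
    simpa [reversed] using continuousAt_reversed.tendsto
  refine (tendsto_reversed.comp tendsto_inv₀_cobounded).congr' ?_
  filter_upwards [eventually_ne_cobounded 0] with x hx
  simp only [Function.comp_apply, reversed]
  rw [← mul_div_mul_right _ _ (pow_ne_zero 2 hx)]
  congr 1 <;> field_simp

/-- The factor `r` in `x_t = r l * x_{t-h}` obtained by applying the integrator with step size `h`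
and coefficients `c₀` and `c₋₁ = -c₀` to `ẋ = l * x`; `c₀` is a free parameter, not yet tied to
`ω`. -/
noncomputable def amplificationFactor (h c₀ l : ℝ) : ℝ :=
  (1 + (h / 2) * l + -c₀ * l ^ 2) / (1 - (h / 2) * l - c₀ * l ^ 2)

section AmplificationFactor

variable {h c₀ : ℝ}

theorem amplificationFactor_denom_pos (hc₀ : c₀ < -(h ^ 2 / 16)) (l : ℝ) :
    0 < 1 - (h / 2) * l - c₀ * l ^ 2 := by
  have neg_c₀_pos : 0 < -c₀ := by linarith [sq_nonneg h]
  have discrim_neg : discrim (-c₀) (-(h / 2)) 1 < 0 := by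
    rw [discrim]
    linarith
  linarith [quadratic_pos_of_discrim_neg neg_c₀_pos discrim_neg l]

theorem amplificationFactor_pos (hc₀ : c₀ < -(h ^ 2 / 16)) (l : ℝ) :
    0 < amplificationFactor h c₀ l := by
  have num_pos : 0 < 1 + (h / 2) * l + -c₀ * l ^ 2 := by
    linarith [amplificationFactor_denom_pos hc₀ (-l)]
  exact div_pos num_pos (amplificationFactor_denom_pos hc₀ l)

theorem amplificationFactor_lt_one (hc₀ : c₀ < -(h ^ 2 / 16)) {l : ℝ} (hl : h * l < 0) :
    amplificationFactor h c₀ l < 1 := by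
  rw [amplificationFactor, div_lt_one (amplificationFactor_denom_pos hc₀ l)]
  linarith

theorem tendsto_amplificationFactor_cobounded (hc₀ : c₀ ≠ 0) :
    Tendsto (amplificationFactor h c₀) (cobounded ℝ) (𝓝 1) := by
  have tendsto_quotient := tendsto_quadratic_div_quadratic_cobounded (a := -c₀)
    (h / 2) 1 (-(h / 2)) 1 (neg_ne_zero.2 hc₀)
  rw [div_self (neg_ne_zero.2 hc₀)] at tendsto_quotient
  refine tendsto_quotient.congr fun l ↦ ?_
  rw [amplificationFactor]
  congr 1 <;> ring

end AmplificationFactor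

theorem integratorA_coeff_lt {ω h : ℝ} (hω : 0 < ω) (hh : 0 < h) (hωh : ω * h < 2 * π) :
    -1 / ω ^ 2 + (h / (2 * ω)) * cot (ω * h / 2) < -(h ^ 2 / 16) := by
  have sq_lt : (ω * h / 4) ^ 2 < 1 - ω * h / 2 * cot (ω * h / 2) := by
    rw [show ω * h / 2 = 2 * (ω * h / 4) by ring]
    exact sq_lt_one_sub_mul_cot_two_mul (by positivity) (by linarith)
  calc -1 / ω ^ 2 + (h / (2 * ω)) * cot (ω * h / 2)
      = -((1 - ω * h / 2 * cot (ω * h / 2)) / ω ^ 2) := by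
        field_simp
        ring
    _ < -((ω * h / 4) ^ 2 / ω ^ 2) := by gcongr
    _ = -(h ^ 2 / 16) := by
        field_simp
        norm_num

open Filter in
theorem integratorA_transient_performance
    (ω h : ℝ) (hω : 0 < ω) (hh : 0 < h) (hωh : ω * h < 2 * Real.pi)
    (c₀ cm1 : ℝ)
    (hc₀ : c₀ = -1 / ω ^ 2 + (h / (2 * ω)) * Real.cot (ω * h / 2))
    (hcm1 : cm1 = -c₀)
    (r : ℝ → ℝ)
    (hr : r = fun l => (1 + (h / 2) * l + cm1 * l ^ 2)
      / (1 - (h / 2) * l - c₀ * l ^ 2)) :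
    (∀ l : ℝ, l < 0 → 0 < r l ∧ r l < 1) ∧ Tendsto r atBot (nhds 1) := by
  have c₀_lt : c₀ < -(h ^ 2 / 16) := hc₀ ▸ integratorA_coeff_lt hω hh hωh
  have c₀_ne_zero : c₀ ≠ 0 := ne_of_lt (by linarith [sq_nonneg h])
  have r_eq : r = amplificationFactor h c₀ := by
    rw [hr, hcm1]
    rfl
  rw [r_eq]
  exact ⟨fun l hl ↦ ⟨amplificationFactor_pos c₀_lt l,
      amplificationFactor_lt_one c₀_lt (mul_neg_of_pos_of_neg hh hl)⟩,
    (tendsto_amplificationFactor_cobounded c₀_ne_zero).mono_left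
      IsOrderBornology.atBot_le_cobounded⟩
end

section
/- Let h > 0 and define for real λ the amplification factor r(λ) = 1/(1 − h·λ + (h²/2)·λ²). Then 0 < r(λ) < 1 for every real λ < 0, and r(λ) tends to 0 as λ tends to −∞; that is, Integrator D induces no numerical oscillation and strongly damps fast decaying transients, for every step size. -/
/-!
With `z = hλ`, the amplification factor is `R z = 1 / (1 - z + z ^ 2 / 2)`, whose denominator is
`((1 - z) ^ 2 + 1) / 2`. It is therefore positive everywhere, exceeds `1` for `z < 0`, and is at
least `-z`, hence grows without bound as `z → -∞`.
-/

section StabilityFunction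

variable {K : Type*} [Field K]

/-- The stability function `R` of Integrator D: on `ẋ = λ x` with step size `h`, solving
`x_t = x_{t-h} + z x_t - (z ^ 2 / 2) x_t`, `z = hλ`, for `x_t` gives `x_t = R z * x_{t-h}`. -/
def integratorDStability (z : K) : K :=
  1 / (1 - z + z ^ 2 / 2)

namespace integratorDStability

theorem apply_mul (h l : K) :
    integratorDStability (h * l) = 1 / (1 - h * l + (h ^ 2 / 2) * l ^ 2) := by
  rw [integratorDStability, mul_pow, div_mul_eq_mul_div]

variable [LinearOrder K] [IsStrictOrderedRing K]

theorem pos (z : K) : 0 < integratorDStability z := by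
  have complete_square : 1 - z + z ^ 2 / 2 = ((1 - z) ^ 2 + 1) / 2 := by ring
  rw [integratorDStability, complete_square]
  positivity

theorem lt_one_of_neg {z : K} (hz : z < 0) : integratorDStability z < 1 := by
  have one_lt_denom : 1 < 1 - z + z ^ 2 / 2 := by linarith [sq_nonneg z]
  simpa only [integratorDStability, one_div] using inv_lt_one_of_one_lt₀ one_lt_denom

theorem tendsto_atBot [TopologicalSpace K] [OrderTopology K] :
    Filter.Tendsto (integratorDStability : K → K) Filter.atBot (nhds 0) := by
  have neg_le_denom (z : K) : -z ≤ 1 - z + z ^ 2 / 2 := by linarith [sq_nonneg z]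
  have denom_atTop : Filter.Tendsto (fun z : K => 1 - z + z ^ 2 / 2) Filter.atBot Filter.atTop :=
    Filter.tendsto_atTop_mono neg_le_denom Filter.tendsto_neg_atBot_atTop
  exact denom_atTop.const_div_atTop 1

end integratorDStability

theorem integratorD_transient_performance_general [LinearOrder K] [IsStrictOrderedRing K]
    [TopologicalSpace K] [OrderTopology K] {h : K} (hh : 0 < h) (r : K → K)
    (hr : r = fun l => 1 / (1 - h * l + (h ^ 2 / 2) * l ^ 2)) :
    (∀ l, 0 < r l) ∧ (∀ l < 0, r l < 1) ∧ Filter.Tendsto r Filter.atBot (nhds 0) := by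
  obtain rfl : r = fun l => integratorDStability (h * l) := by
    simp only [hr, integratorDStability.apply_mul]
  exact ⟨fun l => integratorDStability.pos (h * l),
    fun l hl => integratorDStability.lt_one_of_neg (mul_neg_of_pos_of_neg hh hl),
    integratorDStability.tendsto_atBot.comp (Filter.tendsto_id.const_mul_atBot hh)⟩

end StabilityFunction

open Filter in
theorem integratorD_transient_performance
    (h : ℝ) (hh : 0 < h)
    (r : ℝ → ℝ)
    (hr : r = fun l => 1 / (1 - h * l + (h ^ 2 / 2) * l ^ 2)) :
    (∀ l : ℝ, l < 0 → 0 < r l ∧ r l < 1) ∧ Tendsto r atBot (nhds 0) := by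
  obtain ⟨pos, lt_one, tendsto_zero⟩ := integratorD_transient_performance_general hh r hr
  exact ⟨fun l hl => ⟨pos l, lt_one l hl⟩, tendsto_zero⟩
end
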